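/- Let χ be a partial k-edge-coloring of G and let MP denote the set of all maximal alternating paths of G under χ (over all pairs of distinct colors in {1,…,k}). Then Σ_{P ∈ MP} |I(P)| ≤ Σ_{e colored by χ} w(e), i.e., the total number of internal edges over all maximal alternating paths is at most the sum of the weights of the colored edges. -/

import Mathlib

namespace EC

open Classical

/-- A partial `k`-edge-coloring of `G`. -/
def IsPartialColoring {V : Type*} (G : SimpleGraph V) (k : ℕ)
    (χ : Sym2 V → Option (Fin k)) : Prop :=
  (∀ e, e ∉ G.edgeSet → χ e = none) ∧
  ∀ e f : Sym2 V, e ≠ f → (∃ v : V, v ∈ e ∧ v ∈ f) →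
    ∀ c : Fin k, χ e = some c → χ f ≠ some c

/-- A maximal `(c₀,c₁)`-alternating path: a simple path with distinct endpoints all of whose
edges are colored `c₀` or `c₁`, such that each of its two endpoint vertices is incident to
exactly one edge colored `c₀` or `c₁`. -/
def IsMaxAltPath {V : Type*} (G : SimpleGraph V) {k : ℕ} (χ : Sym2 V → Option (Fin k))
    (c₀ c₁ : Fin k) {a b : V} (p : G.Walk a b) : Prop :=
  p.IsPath ∧ a ≠ b ∧
  (∀ e ∈ p.edges, χ e = some c₀ ∨ χ e = some c₁) ∧
  (∃! w : V, χ s(a, w) = some c₀ ∨ χ s(a, w) = some c₁) ∧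
  (∃! w : V, χ s(b, w) = some c₀ ∨ χ s(b, w) = some c₁)

/-- `x = (q, S)` represents a maximal alternating path of `G` under `χ`: `q` is an unordered
pair of distinct colors `{c₀, c₁}` and `S` is the edge set of a maximal `(c₀,c₁)`-alternating
path of `G`. -/
def IsMaxAltPathPair {V : Type*} [DecidableEq V] (G : SimpleGraph V) {k : ℕ}
    (χ : Sym2 V → Option (Fin k)) (q : Sym2 (Fin k)) (S : Finset (Sym2 V)) : Prop :=
  ∃ (c₀ c₁ : Fin k) (a b : V) (p : G.Walk a b),
    c₀ ≠ c₁ ∧ q = s(c₀, c₁) ∧ IsMaxAltPath G χ c₀ c₁ p ∧ S = p.edges.toFinset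

/-- `e` is an internal edge of the maximal alternating path represented by `x = (q, S)`:
`e` lies on the path and neither endpoint of `e` is an endpoint of the path. -/
def IsInternalEdgeOf {V : Type*} [DecidableEq V] (G : SimpleGraph V) {k : ℕ}
    (χ : Sym2 V → Option (Fin k)) (q : Sym2 (Fin k)) (S : Finset (Sym2 V))
    (e : Sym2 V) : Prop :=
  ∃ (c₀ c₁ : Fin k) (a b : V) (p : G.Walk a b),
    c₀ ≠ c₁ ∧ q = s(c₀, c₁) ∧ IsMaxAltPath G χ c₀ c₁ p ∧ S = p.edges.toFinset ∧
    e ∈ p.edges ∧ a ∉ e ∧ b ∉ e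

/-- The weight `w(e)` of an edge `e = (u,v)` of `G`: the minimum of the degrees of its two
endpoints. -/
def edgeWeight {V : Type*} [Fintype V] (G : SimpleGraph V) [DecidableRel G.Adj]
    (e : Sym2 V) : ℕ :=
  Sym2.lift ⟨fun u v => min (G.degree u) (G.degree v), fun u v => min_comm _ _⟩ e

lemma two_nbrs {V : Type*} {G : SimpleGraph V} {a b : V} (p : G.Walk a b) (hp : p.IsPath) (u : V)
    (hu : u ∈ p.support) (ha : u ≠ a) (hb : u ≠ b) :
    ∃ w₁ w₂, w₁ ≠ w₂ ∧ s(u, w₁) ∈ p.edges ∧ s(u, w₂) ∈ p.edges := by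
  induction p with
  | nil => simp at hu; exact absurd hu ha
  | @cons a m b h p ih =>
    rw [SimpleGraph.Walk.cons_isPath_iff] at hp
    have hu' : u ∈ p.support := by
      rw [SimpleGraph.Walk.support_cons, List.mem_cons] at hu
      exact hu.resolve_left ha
    by_cases hm : u = m
    · subst hm
      cases p with
      | nil => exact absurd rfl hb
      | @cons _ n _ h' p' =>
        refine ⟨a, n, ?_, ?_, ?_⟩
        · rintro rfl
          apply hp.2
          simp
        · simp [Sym2.eq_swap]
        · simp
    · obtain ⟨w₁, w₂, h1, h2, h3⟩ := ih hp.1 hu' hm hb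
      exact ⟨w₁, w₂, h1, by simp [h2], by simp [h3]⟩

lemma start_nbr {V : Type*} {G : SimpleGraph V} {a b : V} (p : G.Walk a b) (hab : a ≠ b) :
    ∃ w, s(a, w) ∈ p.edges := by
  cases p with
  | nil => exact absurd rfl hab
  | @cons _ n _ h p => exact ⟨n, by simp⟩

lemma all_support {V : Type*} {G : SimpleGraph V} {a b : V} (p : G.Walk a b) (T : V → Prop)
    (hT : ∀ x y, T x → s(x, y) ∈ p.edges → T y) (hx : ∃ x ∈ p.support, T x) :
    ∀ x ∈ p.support, T x := by
  induction p with
  | nil => simpa using hx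
  | @cons a m b h p ih =>
    have hT' : ∀ x y, T x → s(x, y) ∈ p.edges → T y := fun x y h1 h2 => hT x y h1 (by simp [h2])
    have key : T a ∧ ∃ x ∈ p.support, T x := by
      obtain ⟨x, hx, hTx⟩ := hx
      rw [SimpleGraph.Walk.support_cons, List.mem_cons] at hx
      rcases hx with rfl | hx
      · exact ⟨hTx, m, by simp, hT x m hTx (by simp)⟩
      · have := ih hT' ⟨x, hx, hTx⟩
        exact ⟨hT m a (this m (by simp)) (by simp [Sym2.eq_swap]), x, hx, hTx⟩
    intro x hx
    rw [SimpleGraph.Walk.support_cons, List.mem_cons] at hx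
    rcases hx with rfl | hx
    · exact key.1
    · exact ih hT' key.2 x hx

lemma closed {V : Type*} {G : SimpleGraph V} {k : ℕ} {χ : Sym2 V → Option (Fin k)}
    (hχ : IsPartialColoring G k χ) {c₀ c₁ : Fin k} {a b : V} {p : G.Walk a b}
    (hp : IsMaxAltPath G χ c₀ c₁ p) (x y : V) (hx : x ∈ p.support)
    (hc : χ s(x, y) = some c₀ ∨ χ s(x, y) = some c₁) : s(x, y) ∈ p.edges := by
  obtain ⟨hP, hab, hcol, ha, hb⟩ := hp
  by_cases hxa : x = a
  · subst hxa
    obtain ⟨w, hw⟩ := start_nbr p hab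
    rw [ha.unique hc (hcol _ hw)]; exact hw
  by_cases hxb : x = b
  · subst hxb
    obtain ⟨w, hw⟩ := start_nbr p.reverse hab.symm
    rw [SimpleGraph.Walk.edges_reverse, List.mem_reverse] at hw
    rw [hb.unique hc (hcol _ hw)]; exact hw
  obtain ⟨w₁, w₂, hne, h1, h2⟩ := two_nbrs p hP x hx hxa hxb
  by_contra hn
  have n1 : s(x, w₁) ≠ s(x, y) := fun h => hn (h ▸ h1)
  have n2 : s(x, w₂) ≠ s(x, y) := fun h => hn (h ▸ h2)
  have n3 : s(x, w₁) ≠ s(x, w₂) := fun h => hne (Sym2.congr_right.1 h)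
  have k1 := hχ.2 _ _ n1 ⟨x, by simp, by simp⟩
  have k2 := hχ.2 _ _ n2 ⟨x, by simp, by simp⟩
  have k3 := hχ.2 _ _ n3 ⟨x, by simp, by simp⟩
  have c1 := hcol _ h1
  have c2 := hcol _ h2
  grind

lemma edges_sub {V : Type*} {G : SimpleGraph V} {k : ℕ} {χ : Sym2 V → Option (Fin k)}
    (hχ : IsPartialColoring G k χ) {c₀ c₁ : Fin k} {a b a' b' : V} {p : G.Walk a b}
    {p' : G.Walk a' b'}
    (hp : IsMaxAltPath G χ c₀ c₁ p) (hp' : IsMaxAltPath G χ c₀ c₁ p') (e : Sym2 V)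
    (he : e ∈ p.edges) (he' : e ∈ p'.edges) (f : Sym2 V) (hf : f ∈ p.edges) : f ∈ p'.edges := by
  induction e with | _ u v =>
  induction f with | _ x y =>
  have := all_support p (fun x => x ∈ p'.support)
    (fun x y hx hxy => p'.snd_mem_support_of_mem_edges
      (closed hχ hp' x y hx (hp.2.2.1 _ hxy)))
    ⟨u, p.fst_mem_support_of_mem_edges he, p'.fst_mem_support_of_mem_edges he'⟩
    x (p.fst_mem_support_of_mem_edges hf)
  exact closed hχ hp' x y this (hp.2.2.1 _ hf)

lemma IsMaxAltPath.swap {V : Type*} {G : SimpleGraph V} {k : ℕ} {χ : Sym2 V → Option (Fin k)}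
    {c₀ c₁ : Fin k} {a b : V} {p : G.Walk a b}
    (hp : IsMaxAltPath G χ c₀ c₁ p) : IsMaxAltPath G χ c₁ c₀ p := by
  obtain ⟨hP, hab, hcol, ha, hb⟩ := hp
  refine ⟨hP, hab, fun e he => (hcol e he).symm, ?_, ?_⟩
  · simpa only [or_comm] using ha
  · simpa only [or_comm] using hb

lemma internal_unique {V : Type*} [DecidableEq V] {G : SimpleGraph V} {k : ℕ}
    {χ : Sym2 V → Option (Fin k)} (hχ : IsPartialColoring G k χ) {q : Sym2 (Fin k)}
    {S S' : Finset (Sym2 V)} {e : Sym2 V} (h : IsInternalEdgeOf G χ q S e)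
    (h' : IsInternalEdgeOf G χ q S' e) : S = S' := by
  obtain ⟨c₀, c₁, a, b, p, hne, hq, hp, rfl, he, -, -⟩ := h
  obtain ⟨d₀, d₁, a', b', p', hne', hq', hp', rfl, he', -, -⟩ := h'
  have hp'' : IsMaxAltPath G χ c₀ c₁ p' := by
    rw [hq, Sym2.eq_iff] at hq'
    rcases hq' with ⟨rfl, rfl⟩ | ⟨rfl, rfl⟩
    · exact hp'
    · exact hp'.swap
  ext f
  simp only [List.mem_toFinset]
  exact ⟨edges_sub hχ hp hp'' e he he' f, edges_sub hχ hp'' hp e he' he f⟩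

lemma internal_nbr {V : Type*} [DecidableEq V] {G : SimpleGraph V} {k : ℕ}
    {χ : Sym2 V → Option (Fin k)} (hχ : IsPartialColoring G k χ) {q : Sym2 (Fin k)}
    {S : Finset (Sym2 V)} {u v : V} (h : IsInternalEdgeOf G χ q S s(u, v)) :
    ∃ w, G.Adj u w ∧ ∃ c c', χ s(u, v) = some c ∧ χ s(u, w) = some c' ∧ q = s(c, c') := by
  obtain ⟨c₀, c₁, a, b, p, hne, hq, hp, rfl, he, ha, hb⟩ := h
  simp only [Sym2.mem_iff, not_or] at ha hb
  obtain ⟨w₁, w₂, hw, h1, h2⟩ := two_nbrs p hp.1 u (p.fst_mem_support_of_mem_edges he)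
    (Ne.symm ha.1) (Ne.symm hb.1)
  obtain ⟨w, hwv, h3⟩ : ∃ w, v ≠ w ∧ s(u, w) ∈ p.edges := by
    by_cases hv : v = w₁
    · exact ⟨w₂, hv ▸ hw, h2⟩
    · exact ⟨w₁, hv, h1⟩
  refine ⟨w, p.adj_of_mem_edges h3, ?_⟩
  have n3 : s(u, v) ≠ s(u, w) := fun h => hwv (Sym2.congr_right.1 h)
  have k3 := hχ.2 _ _ n3 ⟨u, by simp, by simp⟩
  rcases hp.2.2.1 _ he with h4 | h4 <;> rcases hp.2.2.1 _ h3 with h5 | h5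
  · exact absurd h5 (k3 _ h4)
  · exact ⟨_, _, h4, h5, hq⟩
  · exact ⟨_, _, h4, h5, hq.trans Sym2.eq_swap⟩
  · exact absurd h5 (k3 _ h4)

lemma card_le_degree {V : Type*} [Fintype V] [DecidableEq V]
    (G : SimpleGraph V) [DecidableRel G.Adj] {k : ℕ}
    (χ : Sym2 V → Option (Fin k)) (hχ : IsPartialColoring G k χ) (u v : V)
    (A : Finset (Sym2 (Fin k) × Finset (Sym2 V)))
    (hA : ∀ x ∈ A, IsInternalEdgeOf G χ x.1 x.2 s(u, v)) : A.card ≤ G.degree u := by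
  have : Nonempty V := ⟨u⟩
  choose! f hf using fun x hx => internal_nbr hχ (hA x hx)
  rw [← SimpleGraph.card_neighborFinset_eq_degree]
  refine Finset.card_le_card_of_injOn f (fun x hx => by simpa using (hf x hx).1) ?_
  intro x hx y hy hxy
  obtain ⟨c, c', h1, h2, h3⟩ := (hf x hx).2
  obtain ⟨d, d', g1, g2, g3⟩ := (hf y hy).2
  rw [hxy] at h2
  have e1 : c = d := Option.some.inj (h1.symm.trans g1)
  have e2 : c' = d' := Option.some.inj (h2.symm.trans g2)
  have e3 : x.1 = y.1 := by rw [h3, g3, e1, e2]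
  have i1 := hA x hx
  rw [e3] at i1
  exact Prod.ext e3 (internal_unique hχ i1 (hA y hy))

/-- The total number of internal edges, summed over all maximal alternating paths of `G`
under `χ` (over all pairs of distinct colors), is at most the sum of the weights of the
colored edges. -/
theorem sum_internal_le_sum_weight {V : Type*} [Fintype V] [DecidableEq V]
    (G : SimpleGraph V) [DecidableRel G.Adj] {k : ℕ}
    (χ : Sym2 V → Option (Fin k)) (hχ : IsPartialColoring G k χ) :
    ∑ x ∈ (Set.toFinite {x : Sym2 (Fin k) × Finset (Sym2 V) |
        IsMaxAltPathPair G χ x.1 x.2}).toFinset,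
      {e : Sym2 V | IsInternalEdgeOf G χ x.1 x.2 e}.ncard
      ≤ ∑ e ∈ G.edgeFinset.filter (fun e => χ e ≠ none), edgeWeight G e := by
  set X := (Set.toFinite {x : Sym2 (Fin k) × Finset (Sym2 V) |
        IsMaxAltPathPair G χ x.1 x.2}).toFinset
  set E := G.edgeFinset.filter (fun e => χ e ≠ none)
  have h1 : ∀ x ∈ X, {e : Sym2 V | IsInternalEdgeOf G χ x.1 x.2 e}.ncard
      = ∑ e ∈ E, if IsInternalEdgeOf G χ x.1 x.2 e then 1 else 0 := by
    intro x _
    rw [← Finset.sum_filter, Finset.sum_const, smul_eq_mul, mul_one, ← Set.ncard_coe_finset]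
    congr 1
    ext e
    simp only [Set.mem_setOf_eq, Finset.coe_filter, E, Finset.mem_filter,
      SimpleGraph.mem_edgeFinset]
    refine ⟨fun h => ⟨?_, h⟩, fun h => h.2⟩
    obtain ⟨c₀, c₁, a, b, p, hne, hq, hp, -, he, ha, hb⟩ := h
    refine ⟨p.edges_subset_edgeSet he, ?_⟩
    rcases hp.2.2.1 _ he with h | h <;> simp [h]
  rw [Finset.sum_congr rfl h1, Finset.sum_comm]
  refine Finset.sum_le_sum fun e _ => ?_
  rw [← Finset.sum_filter, Finset.sum_const, smul_eq_mul, mul_one]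
  induction e with | _ u v =>
  refine le_min (card_le_degree G χ hχ u v _ ?_) (card_le_degree G χ hχ v u _ ?_)
  · intro x hx
    exact (Finset.mem_filter.1 hx).2
  · intro x hx
    rw [Sym2.eq_swap]
    exact (Finset.mem_filter.1 hx).2

end EC
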